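/- Let B be the open unit ball of ℝ³ and let s = 1/2. For all positive real numbers a, b, m there exists δ = δ(a, b, m) > 0 such that: for every compact set K ⊂ B there is a constant c = c(a, b, m, K) with the property that for every function V : B → ℝ with a ≤ V(x) ≤ b for all x ∈ B and |V(x) − V(y)| ≤ A|x − y|^{1/2} for all x, y ∈ B with some A ∈ (0, δ], and every u ∈ C²(B) satisfying u ≥ m in B and −∑ᵢ ∂²u/∂xᵢ² = V u⁵ in B, one has sup_K u ≤ c. -/

import Mathlib

open MeasureTheory Metric Real

/-- The Euclidean Laplacian `∑ i, ∂²u/∂xᵢ²` (without sign). -/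
noncomputable def lapl {n : ℕ} (u : EuclideanSpace ℝ (Fin n) → ℝ)
    (x : EuclideanSpace ℝ (Fin n)) : ℝ :=
  ∑ i : Fin n,
    fderiv ℝ (fun y => fderiv ℝ u y (EuclideanSpace.single i 1)) x (EuclideanSpace.single i 1)

/-!
The proof compares `u` with its Kelvin transforms `u_{c,R}`, which solve the same equation with `V`
replaced by its reflection. By the Hölder condition the resulting error is dominated by the
Laplacian of `β (R⁻¹ - |x - c|⁻¹)²`, so `u - u_{c,R}` minus this barrier and minus a small multiple
of `|x - c|² - R²` cannot have a local minimum unless `u` lies below `u_{c,R}` by a fixed amount.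
That gap cannot open continuously as `R` grows from `0`, and `u_{c,R} ≤ u` follows for every small
sphere, the lower bound `m` controlling the outer boundary.

If `u` were too large somewhere, point selection gives `x₀` at which `h = u x₀` is large and
`u ≤ 2h` on a ball of radius comparable to `ρ = ℓ / h²`. The constant `δ` is what lets the spheres
run at scale `ρ` for every `h`, and comparing each nearby point with `x₀` gives `u ≥ h / 2` on the
ball of radius `ρ`. There `-Δu ≥ a (h / 2)⁵`, which forces `u` to drop by more than `h / 2` once `ℓ`
is large in terms of `a`.
-/

open EuclideanGeometry Filter InnerProductSpace Laplacian Module Topology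

section SecondDerivative

variable {E F G : Type*} [NormedAddCommGroup E] [NormedSpace ℝ E] [NormedAddCommGroup F]
  [NormedSpace ℝ F] [NormedAddCommGroup G] [NormedSpace ℝ G] {x : E}

theorem eventually_differentiableAt_of_contDiffAt_two {f : E → F} (hf : ContDiffAt ℝ 2 f x) :
    ∀ᶠ y in 𝓝 x, DifferentiableAt ℝ f y :=
  (hf.eventually (by simp)).mono fun _ hy ↦ hy.differentiableAt two_ne_zero

theorem differentiableAt_fderiv_of_contDiffAt_two {f : E → F} (hf : ContDiffAt ℝ 2 f x) :
    DifferentiableAt ℝ (fderiv ℝ f) x :=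
  (hf.fderiv_right (m := 1) le_rfl).differentiableAt one_ne_zero

theorem fderiv_fderiv_apply_eq {f : E → F} (hf : ContDiffAt ℝ 2 f x) (v w : E) :
    fderiv ℝ (fderiv ℝ f) x v w = fderiv ℝ (fun y ↦ fderiv ℝ f y w) x v := by
  have hD := (differentiableAt_fderiv_of_contDiffAt_two hf).hasFDerivAt
  simp [(hD.clm_apply (hasFDerivAt_const w x)).fderiv]

theorem fderiv_fderiv_comp_apply {f : F → G} {φ : E → F} (hf : ContDiffAt ℝ 2 f (φ x))
    (hφ : ContDiffAt ℝ 2 φ x) (v w : E) :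
    fderiv ℝ (fderiv ℝ (f ∘ φ)) x v w =
      fderiv ℝ (fderiv ℝ f) (φ x) (fderiv ℝ φ x v) (fderiv ℝ φ x w) +
        fderiv ℝ f (φ x) (fderiv ℝ (fderiv ℝ φ) x v w) := by
  have hdφ := eventually_differentiableAt_of_contDiffAt_two hφ
  have hfirst : (fun y ↦ fderiv ℝ (f ∘ φ) y w) =ᶠ[𝓝 x]
      fun y ↦ (fderiv ℝ f ∘ φ) y (fderiv ℝ φ y w) := by
    filter_upwards [hdφ, hφ.continuousAt.eventually
      (eventually_differentiableAt_of_contDiffAt_two hf)] with y hφy hfy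
    simp [fderiv_comp y hfy hφy]
  have hDf := (differentiableAt_fderiv_of_contDiffAt_two hf).hasFDerivAt.comp x
    hdφ.self_of_nhds.hasFDerivAt
  have hDφ := (differentiableAt_fderiv_of_contDiffAt_two hφ).hasFDerivAt.clm_apply
    (hasFDerivAt_const w x)
  rw [fderiv_fderiv_apply_eq (hf.comp x hφ), hfirst.fderiv_eq, (hDf.clm_apply hDφ).fderiv]
  simp [add_comm]

theorem fderiv_fderiv_smul_apply {g : E → ℝ} {f : E → F} (hg : ContDiffAt ℝ 2 g x)
    (hf : ContDiffAt ℝ 2 f x) (v w : E) :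
    fderiv ℝ (fderiv ℝ (g • f)) x v w =
      g x • fderiv ℝ (fderiv ℝ f) x v w + fderiv ℝ g x v • fderiv ℝ f x w +
        (fderiv ℝ g x w • fderiv ℝ f x v + fderiv ℝ (fderiv ℝ g) x v w • f x) := by
  have hdg := eventually_differentiableAt_of_contDiffAt_two hg
  have hdf := eventually_differentiableAt_of_contDiffAt_two hf
  have hfirst : (fun y ↦ fderiv ℝ (g • f) y w) =ᶠ[𝓝 x]
      fun y ↦ g y • fderiv ℝ f y w + fderiv ℝ g y w • f y := by
    filter_upwards [hdg, hdf] with y hgy hfy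
    simp [fderiv_smul hgy hfy]
  have hDg := (differentiableAt_fderiv_of_contDiffAt_two hg).hasFDerivAt.clm_apply
    (hasFDerivAt_const w x)
  have hDf := (differentiableAt_fderiv_of_contDiffAt_two hf).hasFDerivAt.clm_apply
    (hasFDerivAt_const w x)
  rw [fderiv_fderiv_apply_eq (hg.smul hf), hfirst.fderiv_eq,
    ((hdg.self_of_nhds.hasFDerivAt.fun_smul hDf).fun_add
      (hDg.fun_smul hdf.self_of_nhds.hasFDerivAt)).fderiv]
  simp

theorem fderiv_fderiv_nonneg_of_isLocalMin {f : E → ℝ} (hmin : IsLocalMin f x)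
    (hf : ContDiffAt ℝ 2 f x) (v : E) : 0 ≤ fderiv ℝ (fderiv ℝ f) x v v := by
  set γ : ℝ → E := fun t ↦ x + t • v
  have hγ (t : ℝ) : HasDerivAt γ v t := by
    simpa only [one_smul] using ((hasDerivAt_id' t).smul_const v).const_add x
  have hγ0 : γ 0 = x := by simp [γ]
  have hγtendsto : Tendsto γ (𝓝 0) (𝓝 x) := hγ0 ▸ (hγ 0).continuousAt
  have hmin' : IsLocalMin (f ∘ γ) 0 := by
    simpa [IsLocalMin, IsMinFilter, hγ0] using hγtendsto.eventually hmin
  have hdiff := eventually_differentiableAt_of_contDiffAt_two hf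
  have hderiv : deriv (f ∘ γ) =ᶠ[𝓝 0] fun t ↦ fderiv ℝ f (γ t) v :=
    (hγtendsto.eventually hdiff).mono fun t ht ↦ (ht.hasFDerivAt.comp_hasDerivAt t (hγ t)).deriv
  have hderiv2 : deriv (deriv (f ∘ γ)) 0 = fderiv ℝ (fderiv ℝ f) x v v := by
    have hD : HasFDerivAt (fderiv ℝ f) (fderiv ℝ (fderiv ℝ f) x) (γ 0) :=
      hγ0 ▸ (differentiableAt_fderiv_of_contDiffAt_two hf).hasFDerivAt
    simpa [hderiv.deriv_eq] using
      ((hD.comp_hasDerivAt 0 (hγ 0)).clm_apply (hasDerivAt_const 0 v)).deriv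
  rw [← hderiv2]
  by_contra! hneg
  have hmax : IsLocalMax (f ∘ γ) 0 :=
    isLocalMax_of_deriv_deriv_neg hneg hmin'.deriv_eq_zero
      (hdiff.self_of_nhds.continuousAt.comp_of_eq (hγ 0).continuousAt hγ0)
  have hconst : f ∘ γ =ᶠ[𝓝 0] fun _ ↦ f (γ 0) :=
    hmin'.and hmax |>.mono fun t ht ↦ le_antisymm ht.2 ht.1
  exact hneg.ne (by simp [hconst.deriv.deriv_eq])

end SecondDerivative

section Laplacian

variable {E F G ι : Type*} [NormedAddCommGroup E] [InnerProductSpace ℝ E] [FiniteDimensional ℝ E]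
  [NormedAddCommGroup F] [NormedSpace ℝ F] [NormedAddCommGroup G] [NormedSpace ℝ G] [Fintype ι]
  {x : E}

theorem laplacian_eq_sum_fderiv_fderiv (b : OrthonormalBasis ι ℝ E) (f : E → F) (x : E) :
    Δ f x = ∑ i, fderiv ℝ (fderiv ℝ f) x (b i) (b i) := by
  simp [laplacian_eq_iteratedFDeriv_orthonormalBasis f b, iteratedFDeriv_two_apply]

theorem laplacian_nonneg_of_isLocalMin {f : E → ℝ} (hmin : IsLocalMin f x)
    (hf : ContDiffAt ℝ 2 f x) : 0 ≤ Δ f x := by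
  rw [laplacian_eq_sum_fderiv_fderiv (stdOrthonormalBasis ℝ E)]
  exact Finset.sum_nonneg fun i _ ↦ fderiv_fderiv_nonneg_of_isLocalMin hmin hf _

theorem laplacian_comp (b : OrthonormalBasis ι ℝ E) {f : F → G} {φ : E → F}
    (hf : ContDiffAt ℝ 2 f (φ x)) (hφ : ContDiffAt ℝ 2 φ x) :
    Δ (f ∘ φ) x =
      ∑ i, fderiv ℝ (fderiv ℝ f) (φ x) (fderiv ℝ φ x (b i)) (fderiv ℝ φ x (b i)) +
        fderiv ℝ f (φ x) (Δ φ x) := by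
  simp [laplacian_eq_sum_fderiv_fderiv b, fderiv_fderiv_comp_apply hf hφ, Finset.sum_add_distrib]

theorem laplacian_smul_fun (b : OrthonormalBasis ι ℝ E) {g : E → ℝ} {f : E → F}
    (hg : ContDiffAt ℝ 2 g x) (hf : ContDiffAt ℝ 2 f x) :
    Δ (g • f) x =
      g x • Δ f x + (2 : ℝ) • ∑ i, fderiv ℝ g x (b i) • fderiv ℝ f x (b i) + Δ g x • f x := by
  simp only [laplacian_eq_sum_fderiv_fderiv b, fderiv_fderiv_smul_apply hg hf,
    Finset.sum_add_distrib, Finset.smul_sum, Finset.sum_smul, two_smul]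
  abel

end Laplacian

section Radial

theorem dist_rpow_eq_rpow_dist_sq {X : Type*} [PseudoMetricSpace X] (p : ℝ) (c : X) :
    (fun y ↦ dist y c ^ p) = (fun t : ℝ ↦ t ^ (p / 2)) ∘ fun y ↦ dist y c ^ 2 := by
  ext y
  rw [Function.comp_apply, ← rpow_natCast_mul dist_nonneg]
  congr 1
  push_cast
  ring

variable {E ι : Type*} [NormedAddCommGroup E] [InnerProductSpace ℝ E] {c x : E}

theorem contDiff_dist_sq (c : E) : ContDiff ℝ 2 fun y ↦ dist y c ^ 2 := by
  simpa only [dist_eq_norm] using (contDiff_fun_id.sub contDiff_const).norm_sq ℝ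

theorem contDiffAt_dist_rpow (p : ℝ) (hx : x ≠ c) : ContDiffAt ℝ 2 (fun y ↦ dist y c ^ p) x := by
  rw [dist_rpow_eq_rpow_dist_sq]
  exact (contDiffAt_rpow_const_of_ne (pow_ne_zero 2 (dist_ne_zero.2 hx))).comp x
    (contDiff_dist_sq c).contDiffAt

theorem hasFDerivAt_dist_sq (c x : E) :
    HasFDerivAt (fun y ↦ dist y c ^ 2) ((2 : ℝ) • innerSL ℝ (x - c)) x := by
  simp only [dist_eq_norm]
  refine ((hasFDerivAt_id x).sub_const c).norm_sq.congr_fderiv ?_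
  ext v
  simp

theorem hasFDerivAt_inner_sub_left (c w x : E) :
    HasFDerivAt (fun y ↦ inner ℝ (y - c) w) (innerSL ℝ w) x := by
  simpa [real_inner_comm, inner_sub_right] using
    ((innerSL ℝ w).hasFDerivAt (x := x)).sub_const (inner ℝ w c)

theorem fderiv_dist_rpow (p : ℝ) (hx : x ≠ c) :
    fderiv ℝ (fun y ↦ dist y c ^ p) x = (p * dist x c ^ (p - 2)) • innerSL ℝ (x - c) := by
  have hd : dist x c ≠ 0 := dist_ne_zero.2 hx
  have hpow : (dist x c ^ 2) ^ (p / 2 - 1) = dist x c ^ (p - 2) := by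
    rw [← rpow_natCast_mul dist_nonneg]
    congr 1
    push_cast
    ring
  rw [dist_rpow_eq_rpow_dist_sq, ((hasDerivAt_rpow_const (p := p / 2)
    (Or.inl (pow_ne_zero 2 hd))).comp_hasFDerivAt x (hasFDerivAt_dist_sq c x)).fderiv, hpow,
    smul_smul]
  congr 1
  ring

theorem fderiv_fderiv_dist_rpow_apply (p : ℝ) (hx : x ≠ c) (v w : E) :
    fderiv ℝ (fderiv ℝ fun y ↦ dist y c ^ p) x v w =
      p * dist x c ^ (p - 2) * inner ℝ v w +
        p * (p - 2) * dist x c ^ (p - 4) * (inner ℝ (x - c) v * inner ℝ (x - c) w) := by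
  have hfirst : (fun y ↦ fderiv ℝ (fun y ↦ dist y c ^ p) y w) =ᶠ[𝓝 x]
      fun y ↦ p * dist y c ^ (p - 2) * inner ℝ (y - c) w := by
    filter_upwards [isOpen_ne.mem_nhds hx] with y hy
    rw [fderiv_dist_rpow p hy, smul_apply, innerSL_apply_apply, smul_eq_mul]
  have hpow := ((contDiffAt_dist_rpow (p - 2) hx).differentiableAt two_ne_zero).hasFDerivAt
  rw [fderiv_dist_rpow _ hx] at hpow
  rw [fderiv_fderiv_apply_eq (contDiffAt_dist_rpow p hx), hfirst.fderiv_eq,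
    ((hpow.const_mul p).fun_mul (hasFDerivAt_inner_sub_left c w x)).fderiv]
  simp [real_inner_comm, inner_sub_left]
  ring_nf

theorem sum_inner_smul_map {F : Type*} [NormedAddCommGroup F] [NormedSpace ℝ F] [Fintype ι]
    (b : OrthonormalBasis ι ℝ E) (y : E) (T : E →L[ℝ] F) :
    ∑ i, inner ℝ y (b i) • T (b i) = T y := by
  conv_rhs => rw [← b.sum_repr' y, map_sum]
  simp [real_inner_comm]

variable [FiniteDimensional ℝ E]

theorem laplacian_dist_sq (c x : E) : Δ (fun y ↦ dist y c ^ 2) x = 2 * finrank ℝ E := by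
  have hfirst (w : E) : (fun y ↦ fderiv ℝ (fun y ↦ dist y c ^ 2) y w) =
      fun y ↦ 2 * inner ℝ (y - c) w := by
    ext y
    rw [(hasFDerivAt_dist_sq c y).fderiv, smul_apply, innerSL_apply_apply,
      smul_eq_mul]
  have hsecond (v w : E) :
      fderiv ℝ (fderiv ℝ fun y ↦ dist y c ^ 2) x v w = 2 * inner ℝ v w := by
    rw [fderiv_fderiv_apply_eq (contDiff_dist_sq c).contDiffAt, hfirst,
      ((hasFDerivAt_inner_sub_left c w x).const_mul 2).fderiv]
    simp [real_inner_comm]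
  simp [laplacian_eq_sum_fderiv_fderiv (stdOrthonormalBasis ℝ E), hsecond, mul_comm]

theorem laplacian_dist_rpow (p : ℝ) (hx : x ≠ c) :
    Δ (fun y ↦ dist y c ^ p) x = p * (p + finrank ℝ E - 2) * dist x c ^ (p - 2) := by
  set b := stdOrthonormalBasis ℝ E
  have hsum : ∑ i, inner ℝ (x - c) (b i) * inner ℝ (x - c) (b i) = dist x c ^ (2 : ℝ) := by
    simpa [dist_eq_norm, sq] using b.sum_sq_inner_left (x - c)
  have hpow : dist x c ^ (p - 4) * dist x c ^ (2 : ℝ) = dist x c ^ (p - 2) := by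
    rw [← rpow_add (dist_pos.2 hx)]
    ring_nf
  simp only [laplacian_eq_sum_fderiv_fderiv b, fderiv_fderiv_dist_rpow_apply p hx,
    Finset.sum_add_distrib, ← Finset.mul_sum, hsum, mul_assoc, hpow]
  simp
  ring

theorem laplacian_sub_dist_rpow_sq (s : ℝ) (hx : x ≠ c) :
    Δ (fun y ↦ (s - dist y c ^ (2 - finrank ℝ E : ℝ)) ^ 2) x =
      2 * (finrank ℝ E - 2) ^ 2 * dist x c ^ (2 - 2 * finrank ℝ E : ℝ) := by
  set n : ℝ := (finrank ℝ E : ℝ) with n_def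
  set g : E → ℝ := fun y ↦ dist y c ^ (2 - n) with g_def
  have hg : ContDiffAt ℝ 2 g x := contDiffAt_dist_rpow _ hx
  set h : E → ℝ := (fun _ ↦ s) - g with h_def
  have hconst : ContDiffAt ℝ 2 (fun _ : E ↦ s) x := contDiffAt_const
  have hh : ContDiffAt ℝ 2 h x := hconst.sub hg
  have hharmonic : Δ h x = 0 := by
    rw [h_def, hconst.laplacian_sub hg, laplacian_const, g_def, laplacian_dist_rpow _ hx]
    simp [n_def]
  have hfderiv : fderiv ℝ h x = ((n - 2) * dist x c ^ (-n)) • innerSL ℝ (x - c) := by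
    rw [h_def, fderiv_sub (differentiableAt_const s) (hg.differentiableAt two_ne_zero), g_def,
      fderiv_dist_rpow _ hx, show 2 - n - 2 = -n by ring]
    simp [← neg_smul, ← neg_mul]
  have hpow : dist x c ^ (2 - 2 * n) = dist x c ^ (-n) * dist x c ^ (-n) * dist x c ^ 2 := by
    rw [← rpow_add (dist_pos.2 hx), ← rpow_add_natCast (dist_ne_zero.2 hx)]
    push_cast
    ring_nf
  have hsq : (fun y ↦ (s - g y) ^ 2) = h • h := by
    ext y
    simp [h_def, sq]
  set b := stdOrthonormalBasis ℝ E
  calc Δ (fun y ↦ (s - g y) ^ 2) x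
      = 2 * ∑ i, ((n - 2) * dist x c ^ (-n)) ^ 2 * inner ℝ (x - c) (b i) ^ 2 := by
        rw [hsq, laplacian_smul_fun b hh hh, hharmonic, hfderiv]
        simp only [smul_apply, innerSL_apply_apply, smul_eq_mul, mul_zero, zero_mul, zero_add,
          add_zero, ← sq, mul_pow]
    _ = 2 * (n - 2) ^ 2 * dist x c ^ (2 - 2 * n) := by
        rw [← Finset.mul_sum, b.sum_sq_inner_left, ← dist_eq_norm, hpow]
        ring

end Radial

section Kelvin

variable {E F : Type*} [NormedAddCommGroup E] [InnerProductSpace ℝ E]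
  [NormedAddCommGroup F] [NormedSpace ℝ F] {c x : E} {R : ℝ}

theorem contDiffAt_inversion (R : ℝ) (hx : x ≠ c) : ContDiffAt ℝ 2 (inversion c R) x :=
  contDiffAt_const.inversion contDiffAt_const contDiffAt_fun_id hx

/-- The Kelvin transform of `f` with respect to the sphere of centre `c` and radius `R`. Its value
at `c`, where the weight is a junk value, carries no information. -/
noncomputable def kelvin (c : E) (R : ℝ) (f : E → F) (x : E) : F :=
  (R / dist x c) ^ (finrank ℝ E - 2 : ℝ) • f (inversion c R x)

theorem kelvin_eq_smul (c : E) (hR : 0 ≤ R) (f : E → F) :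
    kelvin c R f = R ^ (finrank ℝ E - 2 : ℝ) •
      (fun y ↦ dist y c ^ (2 - finrank ℝ E : ℝ)) • (f ∘ inversion c R) := by
  ext1 y
  simp only [kelvin, Pi.smul_apply, Pi.smul_apply', Function.comp_apply, smul_smul]
  rw [div_rpow hR dist_nonneg, div_eq_mul_inv, ← rpow_neg dist_nonneg, neg_sub]

theorem contDiffAt_kelvin {f : E → F} (hR : 0 ≤ R) (hx : x ≠ c)
    (hf : ContDiffAt ℝ 2 f (inversion c R x)) : ContDiffAt ℝ 2 (kelvin c R f) x := by
  rw [kelvin_eq_smul c hR]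
  exact ((contDiffAt_dist_rpow _ hx).smul (hf.comp x (contDiffAt_inversion R hx))).const_smul _

theorem kelvin_of_dist_eq {f : E → F} (hR : R ≠ 0) (hx : dist x c = R) : kelvin c R f x = f x := by
  have hfix : inversion c R x = x := inversion_of_mem_sphere hx
  rw [kelvin, hfix, hx, div_self hR, one_rpow, one_smul]

variable [FiniteDimensional ℝ E]

theorem laplacian_inversion (R : ℝ) (hx : x ≠ c) :
    Δ (inversion c R) x =
      (-2 * (finrank ℝ E - 2) * R ^ 2 * dist x c ^ (-4 : ℝ)) • (x - c) := by
  set g : E → ℝ := fun y ↦ dist y c ^ (-2 : ℝ) with g_def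
  have hg : ContDiffAt ℝ 2 g x := contDiffAt_dist_rpow _ hx
  have hsub : ContDiffAt ℝ 2 (fun y ↦ y - c) x := contDiffAt_fun_id.sub contDiffAt_const
  have hinv : inversion c R = R ^ 2 • g • (fun y ↦ y - c) + fun _ ↦ c := by
    ext1 y
    simp [inversion, g, rpow_neg dist_nonneg, div_eq_mul_inv, mul_pow, smul_smul]
  have hΔsub : Δ (fun y ↦ y - c) x = 0 := by
    have hfderiv : fderiv ℝ (fun y : E ↦ y - c) = fun _ ↦ ContinuousLinearMap.id ℝ E := by
      ext1 y
      exact ((hasFDerivAt_id y).sub_const c).fderiv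
    simp [laplacian_eq_sum_fderiv_fderiv (stdOrthonormalBasis ℝ E), hfderiv]
  have hsmul : ContDiffAt ℝ 2 (R ^ 2 • g • fun y ↦ y - c) x := (hg.smul hsub).const_smul _
  rw [hinv, hsmul.laplacian_add contDiffAt_const, laplacian_const,
    laplacian_smul _ (hg.smul hsub), laplacian_smul_fun (stdOrthonormalBasis ℝ E) hg hsub, hΔsub,
    g_def, laplacian_dist_rpow _ hx, fderiv_dist_rpow _ hx]
  simp only [smul_apply, innerSL_apply_apply, smul_eq_mul, mul_smul, ← Finset.smul_sum,
    sum_inner_smul_map]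
  simp only [fderiv_sub_const, fderiv_fun_id, ContinuousLinearMap.id_apply, smul_zero, zero_add,
    Pi.zero_apply, add_zero, show (-2 - 2 : ℝ) = -4 by norm_num]
  module

theorem laplacian_comp_inversion {f : E → F} (hx : x ≠ c)
    (hf : ContDiffAt ℝ 2 f (inversion c R x)) :
    Δ (f ∘ inversion c R) x = (R / dist x c) ^ 4 • Δ f (inversion c R x) +
      fderiv ℝ f (inversion c R x) (Δ (inversion c R) x) := by
  have hinv := contDiffAt_inversion R hx
  set b := stdOrthonormalBasis ℝ E
  set b' := b.map (ℝ ∙ (x - c))ᗮ.reflection with b'_def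
  have hfderiv (i) : fderiv ℝ (inversion c R) x (b i) = (R / dist x c) ^ 2 • b' i := by
    simp [(hasFDerivAt_inversion hx).fderiv, b'_def]
  rw [laplacian_comp b hf hinv, laplacian_eq_sum_fderiv_fderiv b' f, Finset.smul_sum]
  simp only [hfderiv, map_smul, smul_apply, smul_smul]
  ring_nf

/-- Conformal covariance of the Laplacian: the gradient terms produced by the weight and by the
inversion cancel exactly for the exponent `finrank ℝ E - 2`. -/
theorem laplacian_kelvin {f : E → F} (hR : 0 < R) (hx : x ≠ c)
    (hf : ContDiffAt ℝ 2 f (inversion c R x)) :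
    Δ (kelvin c R f) x =
      (R / dist x c) ^ (finrank ℝ E + 2 : ℝ) • Δ f (inversion c R x) := by
  set n : ℝ := (finrank ℝ E : ℝ) with n_def
  set g : E → ℝ := fun y ↦ dist y c ^ (2 - n) with g_def
  have hd : 0 < dist x c := dist_pos.2 hx
  have hg : ContDiffAt ℝ 2 g x := contDiffAt_dist_rpow _ hx
  have hinv := contDiffAt_inversion R hx
  have hfi : ContDiffAt ℝ 2 (f ∘ inversion c R) x := hf.comp x hinv
  have hharmonic : Δ g x = 0 := by
    simp [g_def, laplacian_dist_rpow _ hx, n_def]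
  have hfderiv : fderiv ℝ (f ∘ inversion c R) x (x - c) =
      -(R / dist x c) ^ 2 • fderiv ℝ f (inversion c R x) (x - c) := by
    rw [fderiv_comp x (hf.differentiableAt two_ne_zero) (hinv.differentiableAt two_ne_zero),
      (hasFDerivAt_inversion hx).fderiv]
    simp [Submodule.reflection_orthogonalComplement_singleton_eq_neg, -map_sub, -neg_sub]
  have hcube : dist x c ^ (2 - n - 2) = dist x c ^ (2 - n) * (dist x c ^ 2)⁻¹ := by
    rw [rpow_sub hd, rpow_two, div_eq_mul_inv]
  have hfour : dist x c ^ (-4 : ℝ) = (dist x c ^ 4)⁻¹ := by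
    simp [rpow_neg hd.le]
  have hfactor : (R / dist x c) ^ (n + 2) = R ^ (n - 2) * g x * (R / dist x c) ^ 4 := by
    simp only [g_def]
    rw [← neg_sub n 2, rpow_neg hd.le, ← div_eq_mul_inv, ← div_rpow hR.le hd.le,
      ← rpow_add_natCast (by positivity)]
    norm_num
    ring_nf
  rw [kelvin_eq_smul c hR.le, laplacian_smul _ (hg.smul hfi),
    laplacian_smul_fun (stdOrthonormalBasis ℝ E) hg hfi, hharmonic,
    laplacian_comp_inversion hx hf, laplacian_inversion R hx, g_def, fderiv_dist_rpow _ hx]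
  simp only [smul_apply, innerSL_apply_apply, smul_eq_mul, mul_smul, ← Finset.smul_sum,
    sum_inner_smul_map, hfderiv, map_smul]
  rw [hcube, hfour, hfactor]
  match_scalars <;> field_simp <;> ring

end Kelvin

section Continuation

/-- The gap makes `{f ≤ -ε}` reach every parameter at which `f` takes a negative value, so a point
of `{f ≤ -ε}` with minimal parameter could be moved further down. -/
theorem nonneg_of_gap_of_descend {X : Type*} [TopologicalSpace X] [T2Space X] {T : Set (ℝ × X)}
    {f : ℝ × X → ℝ} {ε : ℝ} (hT : IsCompact T) (hf : ContinuousOn f T) (hε : 0 < ε)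
    (gap : ∀ s z, (s, z) ∈ T → f (s, z) < 0 → ∃ w, (s, w) ∈ T ∧ f (s, w) ≤ -ε)
    (descend : ∀ s z, (s, z) ∈ T → f (s, z) < 0 → ∃ᶠ s' in 𝓝[<] s, (s', z) ∈ T) :
    ∀ q ∈ T, 0 ≤ f q := by
  by_contra! hneg
  obtain ⟨⟨s₀, z₀⟩, hq₀, hneg₀⟩ := hneg
  obtain ⟨w₀, hw₀, hfw₀⟩ := gap s₀ z₀ hq₀ hneg₀
  have hcompact : IsCompact (T ∩ f ⁻¹' Set.Iic (-ε)) :=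
    hT.of_isClosed_subset (hf.preimage_isClosed_of_isClosed hT.isClosed isClosed_Iic)
      Set.inter_subset_left
  obtain ⟨⟨s, z⟩, ⟨hsz, hfsz⟩, hmin⟩ :=
    hcompact.exists_isMinOn ⟨_, hw₀, hfw₀⟩ continuous_fst.continuousOn
  have hfneg : f (s, z) < 0 := lt_of_le_of_lt hfsz (neg_neg_of_pos hε)
  have hslice : Tendsto (fun s' ↦ (s', z)) (𝓝[{s' | (s', z) ∈ T}] s) (𝓝[T] (s, z)) :=
    (Continuous.prodMk_left z).continuousAt.continuousWithinAt.tendsto_nhdsWithin fun _ h ↦ h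
  have hnear : ∀ᶠ s' in 𝓝 s, (s', z) ∈ T → f (s', z) < 0 :=
    eventually_nhdsWithin_iff.1 (hslice.eventually ((hf _ hsz).eventually_lt_const hfneg))
  obtain ⟨s', hs'T, hs'neg, hs'lt⟩ := ((descend s z hsz hfneg).and_eventually
    ((hnear.filter_mono nhdsWithin_le_nhds).and self_mem_nhdsWithin)).exists
  obtain ⟨w, hw, hfw⟩ := gap s' z hs'T (hs'neg hs'T)
  exact hs'lt.not_ge (hmin ⟨hw, hfw⟩)

end Continuation

section PointSelection

/-- Take `x` maximal for `(σ - dist · p) * g`. -/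
theorem exists_doubling_point {X : Type*} [PseudoMetricSpace X] [ProperSpace X] {g : X → ℝ} {p : X}
    {σ : ℝ} (hg : ContinuousOn g (closedBall p σ)) (hσ : 0 < σ) (hp : 0 < g p) :
    ∃ x ∈ ball p σ, σ * g p ≤ (σ - dist x p) * g x ∧
      ∀ y ∈ closedBall x ((σ - dist x p) / 2), g y ≤ 2 * g x := by
  obtain ⟨x, hx, hmax⟩ := (isCompact_closedBall p σ).exists_isMaxOn
    ⟨p, mem_closedBall_self hσ.le⟩
    (f := fun x ↦ (σ - dist x p) * g x) (by fun_prop)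
  have hpx : σ * g p ≤ (σ - dist x p) * g x := by
    simpa using hmax (mem_closedBall_self hσ.le)
  have hlt : dist x p < σ := by
    refine (mem_closedBall.1 hx).lt_of_ne fun h ↦ ?_
    rw [h, sub_self, zero_mul] at hpx
    exact hpx.not_gt (mul_pos hσ hp)
  have hd : 0 < σ - dist x p := sub_pos.2 hlt
  have hgx : 0 < g x := pos_of_mul_pos_right ((mul_pos hσ hp).trans_le hpx) hd.le
  refine ⟨x, hlt, hpx, fun y hy ↦ ?_⟩
  have hyx : dist y x ≤ (σ - dist x p) / 2 := hy
  have hyp : (σ - dist x p) / 2 ≤ σ - dist y p := by linarith [dist_triangle y x p]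
  by_contra! hlarge
  have hy' : y ∈ closedBall p σ := by rw [mem_closedBall]; linarith
  have hle : (σ - dist y p) * g y ≤ (σ - dist x p) * g x := hmax hy'
  nlinarith

end PointSelection

section LaplacianLowerBound

variable {E : Type*} [NormedAddCommGroup E] [InnerProductSpace ℝ E] [FiniteDimensional ℝ E]
  {f : E → ℝ} {c : E} {ρ h κ : ℝ}

theorem exists_neg_le_laplacian_of_sub_le (hρ : 0 < ρ)
    (hf : ∀ x ∈ closedBall c ρ, ContDiffAt ℝ 2 f x) (hlow : ∀ x ∈ closedBall c ρ, f c - h ≤ f x)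
    (hκ : h < κ * ρ ^ 2) : ∃ x ∈ ball c ρ, -(2 * finrank ℝ E * κ) ≤ Δ f x := by
  set g : E → ℝ := fun x ↦ dist x c ^ 2
  have hg (x : E) : ContDiffAt ℝ 2 (κ • g) x :=
    (contDiff_dist_sq c).contDiffAt.const_smul κ
  have hfg : ContinuousOn (f + κ • g) (closedBall c ρ) := fun x hx ↦
    ((hf x hx).add (hg x)).continuousAt.continuousWithinAt
  obtain ⟨x, hx, hmin⟩ := (isCompact_closedBall c ρ).exists_isMinOn
    ⟨c, mem_closedBall_self hρ.le⟩ hfg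
  have hcenter : f x + κ * dist x c ^ 2 ≤ f c := by
    simpa [g] using hmin (mem_closedBall_self hρ.le)
  have hlt : dist x c < ρ := by
    refine (mem_closedBall.1 hx).lt_of_ne fun heq ↦ ?_
    rw [heq] at hcenter
    linarith [hlow x hx]
  refine ⟨x, hlt, ?_⟩
  have hlocal : IsLocalMin (f + κ • g) x :=
    hmin.isLocalMin (mem_of_superset (isOpen_ball.mem_nhds hlt) ball_subset_closedBall)
  have hΔ := laplacian_nonneg_of_isLocalMin hlocal ((hf x hx).add (hg x))
  rw [(hf x hx).laplacian_add (hg x), laplacian_smul _ (contDiff_dist_sq c).contDiffAt,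
    laplacian_dist_sq, smul_eq_mul] at hΔ
  linarith

end LaplacianLowerBound

section InversionDistance

variable {E : Type*} [NormedAddCommGroup E] [InnerProductSpace ℝ E] {c x : E} {R : ℝ}

theorem dist_inversion_center_le (hR : 0 < R) (hx : R ≤ dist x c) :
    dist (inversion c R x) c ≤ R := by
  rw [dist_inversion_center, div_le_iff₀ (hR.trans_le hx), sq]
  gcongr

theorem dist_inversion_self_le (hR : 0 < R) (hx : R ≤ dist x c) :
    dist (inversion c R x) x ≤ dist x c := by
  have hratio : (R / dist x c) ^ 2 ≤ 1 :=
    pow_le_one₀ (by positivity) (div_le_one_of_le₀ hx dist_nonneg)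
  rw [inversion_eq_lineMap, dist_lineMap_right, Real.norm_of_nonneg (sub_nonneg.2 hratio),
    dist_comm c]
  exact mul_le_of_le_one_left dist_nonneg (sub_le_self 1 (by positivity))

end InversionDistance

theorem pow_sub_pow_le_mul {x y M : ℝ} (n : ℕ) (hy : 0 ≤ y) (hyx : y ≤ x) (hxM : x ≤ M) :
    x ^ n - y ^ n ≤ (x - y) * (n * M ^ (n - 1)) := by
  have hx : 0 ≤ x := hy.trans hyx
  calc x ^ n - y ^ n ≤ |x ^ n - y ^ n| := le_abs_self _
    _ ≤ |x - y| * n * max |x| |y| ^ (n - 1) := abs_pow_sub_pow_le x y n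
    _ = (x - y) * (n * x ^ (n - 1)) := by
      rw [abs_of_nonneg (sub_nonneg.2 hyx), abs_of_nonneg hx, abs_of_nonneg hy, max_eq_left hyx,
        mul_assoc]
    _ ≤ (x - y) * (n * M ^ (n - 1)) := by
      have := sub_nonneg.2 hyx
      gcongr

local notation "ℝ³" => EuclideanSpace ℝ (Fin 3)

section MovingSphere

/-- `u` is a `C²` solution of `-Δ u = V u⁵` on the set `s` of `ℝ³`, bounded below by `m > 0`, where
`V ≥ a > 0` is `1/2`-Hölder with constant `A`. -/
structure CriticalSolution (a m A : ℝ) (V u : ℝ³ → ℝ) (s : Set ℝ³) : Prop where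
  a_pos : 0 < a
  m_pos : 0 < m
  A_pos : 0 < A
  contDiffAt : ∀ x ∈ s, ContDiffAt ℝ 2 u x
  m_le : ∀ x ∈ s, m ≤ u x
  a_le : ∀ x ∈ s, a ≤ V x
  holder : ∀ x ∈ s, ∀ y ∈ s, |V x - V y| ≤ A * √(dist x y)
  laplacian_eq : ∀ x ∈ s, Δ u x = -(V x * u x ^ 5)

/-- The hypotheses under which the method of moving spheres runs for all spheres of centre `c` and
radius at most `L`, inside the ball of radius `r`: `M` bounds `u` on the small ball, and `L` is
small compared with `r` and with the Hölder constant. -/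
structure MovingSphereRegime (a m A r L M : ℝ) (V u : ℝ³ → ℝ) (c : ℝ³) : Prop extends
    CriticalSolution a m A V u (closedBall c r) where
  L_pos : 0 < L
  L_lt : L < r
  r_le_one : r ≤ 1
  le_M : ∀ x ∈ closedBall c L, u x ≤ M
  far_le : L / r * M ≤ m / 4
  holder_le : A * M ^ 5 * √L * L ^ 2 ≤ m / 2

/-- Twice this number dominates the defect of the equation caused by comparing `V` with its
reflection; see `MovingSphereRegime.abs_sub_mul_kelvin_pow_le`. -/
noncomputable def barrierCoeff (A M R : ℝ) : ℝ :=
  A * M ^ 5 * √R * R ^ 4 / 2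

/-- The difference between `u` and its Kelvin transform, corrected by two barriers that vanish on
the sphere: the first absorbs the Hölder error, the second makes the differential inequality
strict. -/
noncomputable def sphereDefect (m A M : ℝ) (u : ℝ³ → ℝ) (c : ℝ³) (R : ℝ) (x : ℝ³) : ℝ :=
  u x - kelvin c R u x - barrierCoeff A M R * (R⁻¹ - (dist x c)⁻¹) ^ 2 -
    m / 8 * (dist x c ^ 2 - R ^ 2)

theorem kelvin_apply_of_finrank_three (c : ℝ³) (R : ℝ) (u : ℝ³ → ℝ) (x : ℝ³) :
    kelvin c R u x = R / dist x c * u (inversion c R x) := by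
  rw [kelvin, finrank_euclideanSpace_fin, smul_eq_mul]
  norm_num

theorem laplacian_kelvin_of_finrank_three {u : ℝ³ → ℝ} {c x : ℝ³} {R : ℝ} (hR : 0 < R)
    (hx : x ≠ c) (hu : ContDiffAt ℝ 2 u (inversion c R x)) :
    Δ (kelvin c R u) x = (R / dist x c) ^ 5 * Δ u (inversion c R x) := by
  rw [laplacian_kelvin hR hx hu, finrank_euclideanSpace_fin, smul_eq_mul, ← rpow_natCast]
  norm_num

theorem contDiffAt_inv_sub_inv_dist_sq {c x : ℝ³} (R : ℝ) (hx : x ≠ c) :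
    ContDiffAt ℝ 2 (fun y ↦ (R⁻¹ - (dist y c)⁻¹) ^ 2) x := by
  simp_rw [← rpow_neg_one (dist _ c)]
  exact (contDiffAt_const.sub (contDiffAt_dist_rpow _ hx)).pow 2

theorem laplacian_inv_sub_inv_dist_sq {c x : ℝ³} (R : ℝ) (hx : x ≠ c) :
    Δ (fun y ↦ (R⁻¹ - (dist y c)⁻¹) ^ 2) x = 2 * (dist x c ^ 4)⁻¹ := by
  have h := laplacian_sub_dist_rpow_sq R⁻¹ hx
  rw [finrank_euclideanSpace_fin] at h
  norm_num [rpow_neg_one, rpow_neg dist_nonneg] at h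
  exact h

variable {a m A r L M R : ℝ} {V u : ℝ³ → ℝ} {c x : ℝ³}

theorem sphereDefect_eq (m A M : ℝ) (u : ℝ³ → ℝ) (c : ℝ³) (R : ℝ) :
    sphereDefect m A M u c R = u - kelvin c R u -
      barrierCoeff A M R • (fun y ↦ (R⁻¹ - (dist y c)⁻¹) ^ 2) -
      (m / 8) • ((fun y ↦ dist y c ^ 2) - fun _ ↦ R ^ 2) := rfl

theorem contDiffAt_sphereDefect (hR : 0 ≤ R) (hx : x ≠ c) (hu : ContDiffAt ℝ 2 u x)
    (hu' : ContDiffAt ℝ 2 u (inversion c R x)) :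
    ContDiffAt ℝ 2 (sphereDefect m A M u c R) x := by
  rw [sphereDefect_eq]
  exact ((hu.sub (contDiffAt_kelvin hR hx hu')).sub
    ((contDiffAt_inv_sub_inv_dist_sq R hx).const_smul (barrierCoeff A M R))).sub
    (((contDiff_dist_sq c).contDiffAt.sub contDiffAt_const).const_smul (m / 8))

theorem laplacian_sphereDefect (hR : 0 < R) (hx : x ≠ c) (hu : ContDiffAt ℝ 2 u x)
    (hu' : ContDiffAt ℝ 2 u (inversion c R x)) :
    Δ (sphereDefect m A M u c R) x = Δ u x - (R / dist x c) ^ 5 * Δ u (inversion c R x) -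
      2 * barrierCoeff A M R * (dist x c ^ 4)⁻¹ - 3 * m / 4 := by
  set b : ℝ³ → ℝ := fun y ↦ (R⁻¹ - (dist y c)⁻¹) ^ 2
  set q : ℝ³ → ℝ := fun y ↦ dist y c ^ 2
  have hk := contDiffAt_kelvin hR.le hx hu'
  have hb : ContDiffAt ℝ 2 b x := contDiffAt_inv_sub_inv_dist_sq R hx
  have hβb : ContDiffAt ℝ 2 (barrierCoeff A M R • b) x := hb.const_smul (barrierCoeff A M R)
  have hq : ContDiffAt ℝ 2 q x := (contDiff_dist_sq c).contDiffAt
  have hq' : ContDiffAt ℝ 2 (q - fun _ ↦ R ^ 2) x := hq.sub contDiffAt_const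
  have hηq : ContDiffAt ℝ 2 ((m / 8) • (q - fun _ ↦ R ^ 2)) x := hq'.const_smul (m / 8)
  have huk : ContDiffAt ℝ 2 (u - kelvin c R u) x := hu.sub hk
  have hukb : ContDiffAt ℝ 2 (u - kelvin c R u - barrierCoeff A M R • b) x := huk.sub hβb
  rw [sphereDefect_eq, hukb.laplacian_sub hηq, huk.laplacian_sub hβb, hu.laplacian_sub hk,
    laplacian_smul _ hb, laplacian_smul _ hq', hq.laplacian_sub contDiffAt_const,
    laplacian_kelvin_of_finrank_three hR hx hu', laplacian_inv_sub_inv_dist_sq R hx,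
    laplacian_dist_sq, laplacian_const, finrank_euclideanSpace_fin]
  simp only [Pi.zero_apply, smul_eq_mul, Nat.cast_ofNat]
  ring

end MovingSphere

namespace MovingSphereRegime

variable {a m A r L M R : ℝ} {V u : ℝ³ → ℝ} {c x : ℝ³}

theorem r_pos (H : MovingSphereRegime a m A r L M V u c) : 0 < r :=
  H.L_pos.trans H.L_lt

theorem M_pos (H : MovingSphereRegime a m A r L M V u c) : 0 < M :=
  H.m_pos.trans_le <| (H.m_le c (mem_closedBall_self H.r_pos.le)).trans
    (H.le_M c (mem_closedBall_self H.L_pos.le))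

theorem inversion_mem_closedBall (H : MovingSphereRegime a m A r L M V u c) (hR : 0 < R)
    (hRL : R ≤ L) (hx : R ≤ dist x c) : inversion c R x ∈ closedBall c r :=
  (dist_inversion_center_le hR hx).trans (hRL.trans H.L_lt.le)

theorem kelvin_pos (H : MovingSphereRegime a m A r L M V u c) (hR : 0 < R)
    (hRL : R ≤ L) (hx : R ≤ dist x c) : 0 < kelvin c R u x := by
  rw [kelvin_apply_of_finrank_three]
  exact mul_pos (div_pos hR (hR.trans_le hx))
    (H.m_pos.trans_le (H.m_le _ (H.inversion_mem_closedBall hR hRL hx)))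

theorem kelvin_le_mul (H : MovingSphereRegime a m A r L M V u c) (hR : 0 < R)
    (hRL : R ≤ L) (hx : R ≤ dist x c) : kelvin c R u x ≤ R / dist x c * M := by
  rw [kelvin_apply_of_finrank_three]
  exact mul_le_mul_of_nonneg_left (H.le_M _ ((dist_inversion_center_le hR hx).trans hRL))
    (by positivity)

theorem kelvin_le (H : MovingSphereRegime a m A r L M V u c) (hR : 0 < R)
    (hRL : R ≤ L) (hx : R ≤ dist x c) : kelvin c R u x ≤ M :=
  (H.kelvin_le_mul hR hRL hx).trans
    (mul_le_of_le_one_left H.M_pos.le (div_le_one_of_le₀ hx dist_nonneg))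

theorem abs_sub_mul_kelvin_pow_le (H : MovingSphereRegime a m A r L M V u c) (hR : 0 < R)
    (hRL : R ≤ L) (hx : R ≤ dist x c) (hxr : dist x c ≤ r) :
    |V (inversion c R x) - V x| * kelvin c R u x ^ 5 ≤
      2 * barrierCoeff A M R * (dist x c ^ 4)⁻¹ := by
  have hA := H.A_pos
  have hM := H.M_pos
  have hk := H.kelvin_pos hR hRL hx
  have hd : 0 < dist x c := hR.trans_le hx
  have hholder : |V (inversion c R x) - V x| ≤ A * √(dist x c) :=
    (H.holder _ (H.inversion_mem_closedBall hR hRL hx) x hxr).trans <| by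
      gcongr
      exact dist_inversion_self_le hR hx
  have hsqrt : √(dist x c) * R ≤ √R * dist x c :=
    calc √(dist x c) * R = √R * (√(dist x c) * √R) := by
          rw [mul_left_comm, mul_self_sqrt hR.le]
      _ ≤ √R * (√(dist x c) * √(dist x c)) := by gcongr
      _ = √R * dist x c := by rw [mul_self_sqrt hd.le]
  calc |V (inversion c R x) - V x| * kelvin c R u x ^ 5
      ≤ A * √(dist x c) * (R / dist x c * M) ^ 5 := by
        gcongr
        exact H.kelvin_le_mul hR hRL hx
    _ = A * M ^ 5 * R ^ 4 * (dist x c ^ 5)⁻¹ * (√(dist x c) * R) := by ring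
    _ ≤ A * M ^ 5 * R ^ 4 * (dist x c ^ 5)⁻¹ * (√R * dist x c) := by gcongr
    _ = 2 * barrierCoeff A M R * (dist x c ^ 4)⁻¹ := by
      rw [barrierCoeff]
      field_simp

theorem barrierCoeff_nonneg (H : MovingSphereRegime a m A r L M V u c) (R : ℝ) :
    0 ≤ barrierCoeff A M R := by
  have hA := H.A_pos
  have hM := H.M_pos
  unfold barrierCoeff
  positivity

theorem barrier_le (H : MovingSphereRegime a m A r L M V u c) (hR : 0 < R)
    (hRL : R ≤ L) (hx : R ≤ dist x c) :
    barrierCoeff A M R * (R⁻¹ - (dist x c)⁻¹) ^ 2 ≤ m / 4 := by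
  have hA := H.A_pos
  have hM := H.M_pos
  have hnonneg : 0 ≤ R⁻¹ - (dist x c)⁻¹ := sub_nonneg.2 (inv_anti₀ hR hx)
  have hsub : R⁻¹ - (dist x c)⁻¹ ≤ R⁻¹ := sub_le_self _ (by positivity)
  calc barrierCoeff A M R * (R⁻¹ - (dist x c)⁻¹) ^ 2
      ≤ barrierCoeff A M R * R⁻¹ ^ 2 := by
        gcongr
        exact H.barrierCoeff_nonneg R
    _ = A * M ^ 5 * √R * R ^ 2 / 2 := by
      rw [barrierCoeff]
      field_simp
    _ ≤ A * M ^ 5 * √L * L ^ 2 / 2 := by gcongr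
    _ ≤ m / 4 := by linarith [H.holder_le]

theorem sphereDefect_le_sub_kelvin (H : MovingSphereRegime a m A r L M V u c) (hR : 0 < R)
    (hx : R ≤ dist x c) : sphereDefect m A M u c R x ≤ u x - kelvin c R u x := by
  have hbarrier : 0 ≤ barrierCoeff A M R * (R⁻¹ - (dist x c)⁻¹) ^ 2 :=
    mul_nonneg (H.barrierCoeff_nonneg R) (sq_nonneg _)
  have hquad : 0 ≤ m / 8 * (dist x c ^ 2 - R ^ 2) :=
    mul_nonneg (by linarith [H.m_pos]) (sub_nonneg.2 (by gcongr))
  rw [sphereDefect]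
  linarith

theorem sphereDefect_pos_of_kelvin_le (H : MovingSphereRegime a m A r L M V u c) (hR : 0 < R)
    (hRL : R ≤ L) (hx : R ≤ dist x c) (hxr : dist x c ≤ r) (hk : kelvin c R u x ≤ m / 4) :
    0 < sphereDefect m A M u c R x := by
  have hm := H.m_pos
  have hdist : dist x c ^ 2 ≤ 1 := pow_le_one₀ dist_nonneg (hxr.trans H.r_le_one)
  have hquad : m / 8 * (dist x c ^ 2 - R ^ 2) ≤ m / 8 :=
    mul_le_of_le_one_right (by positivity) (by nlinarith)
  rw [sphereDefect]
  linarith [H.barrier_le hR hRL hx, H.m_le x hxr]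

theorem sphereDefect_pos_of_dist_eq (H : MovingSphereRegime a m A r L M V u c) (hR : 0 < R)
    (hRL : R ≤ L) (hxr : dist x c = r) : 0 < sphereDefect m A M u c R x := by
  have hM := H.M_pos
  have hr := H.r_pos
  have hx : R ≤ dist x c := (hRL.trans H.L_lt.le).trans_eq hxr.symm
  refine H.sphereDefect_pos_of_kelvin_le hR hRL hx hxr.le ?_
  calc kelvin c R u x ≤ R / r * M := hxr ▸ H.kelvin_le_mul hR hRL hx
    _ ≤ L / r * M := by gcongr
    _ ≤ m / 4 := H.far_le

end MovingSphereRegime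

theorem sphereDefect_eq_zero {m A M R : ℝ} {u : ℝ³ → ℝ} {c x : ℝ³} (hR : R ≠ 0)
    (hx : dist x c = R) : sphereDefect m A M u c R x = 0 := by
  simp [sphereDefect, kelvin_of_dist_eq hR hx, hx]

namespace MovingSphereRegime

variable {a m A r L M R : ℝ} {V u : ℝ³ → ℝ} {c x : ℝ³}

theorem laplacian_sphereDefect_le (H : MovingSphereRegime a m A r L M V u c) (hR : 0 < R)
    (hRL : R ≤ L) (hx : R ≤ dist x c) (hxr : dist x c ≤ r) :
    Δ (sphereDefect m A M u c R) x ≤ V x * (kelvin c R u x ^ 5 - u x ^ 5) - 3 * m / 4 := by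
  have hι := H.inversion_mem_closedBall hR hRL hx
  have hΔk : (R / dist x c) ^ 5 * (V (inversion c R x) * u (inversion c R x) ^ 5) =
      V (inversion c R x) * kelvin c R u x ^ 5 := by
    rw [kelvin_apply_of_finrank_three]
    ring
  have hV : (V (inversion c R x) - V x) * kelvin c R u x ^ 5 ≤
      2 * barrierCoeff A M R * (dist x c ^ 4)⁻¹ :=
    (mul_le_mul_of_nonneg_right (le_abs_self _) (pow_pos (H.kelvin_pos hR hRL hx) 5).le).trans
      (H.abs_sub_mul_kelvin_pow_le hR hRL hx hxr)
  rw [laplacian_sphereDefect hR (dist_pos.1 (hR.trans_le hx)) (H.contDiffAt x hxr)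
    (H.contDiffAt _ hι), H.laplacian_eq x hxr, H.laplacian_eq _ hι]
  linarith

theorem le_add (H : MovingSphereRegime a m A r L M V u c) (hxr : dist x c ≤ r) :
    V x ≤ V c + A := by
  have hholder := (le_abs_self _).trans (H.holder x hxr c (mem_closedBall_self H.r_pos.le))
  have hsqrt : √(dist x c) ≤ 1 := Real.sqrt_le_one.2 (hxr.trans H.r_le_one)
  linarith [mul_le_of_le_one_right H.A_pos.le hsqrt]

/-- At a local minimum of the defect the source terms must pay for the second barrier, which keeps
`u` below its transform by a definite amount; this replaces the strong maximum principle and the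
Hopf lemma. -/
theorem exists_kelvin_gap_of_isLocalMin (H : MovingSphereRegime a m A r L M V u c) :
    ∃ ε > 0, ∀ R x, 0 < R → R ≤ L → R ≤ dist x c → dist x c ≤ r →
      IsLocalMin (sphereDefect m A M u c R) x → u x + ε ≤ kelvin c R u x := by
  have hA := H.A_pos
  have hm := H.m_pos
  have hM := H.M_pos
  have hVc : 0 < V c := H.a_pos.trans_le (H.a_le c (mem_closedBall_self H.r_pos.le))
  refine ⟨3 * m / 4 / ((V c + A) * (5 * M ^ 4)), by positivity, fun R x hR hRL hx hxr hmin ↦ ?_⟩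
  have hux : 0 < u x := hm.trans_le (H.m_le x hxr)
  have hVx : 0 < V x := H.a_pos.trans_le (H.a_le x hxr)
  have hk := H.kelvin_pos hR hRL hx
  have hΔ : 0 ≤ Δ (sphereDefect m A M u c R) x :=
    laplacian_nonneg_of_isLocalMin hmin <| contDiffAt_sphereDefect hR.le
      (dist_pos.1 (hR.trans_le hx)) (H.contDiffAt x hxr)
      (H.contDiffAt _ (H.inversion_mem_closedBall hR hRL hx))
  have hsource : 3 * m / 4 ≤ V x * (kelvin c R u x ^ 5 - u x ^ 5) := by
    linarith [H.laplacian_sphereDefect_le hR hRL hx hxr]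
  have hpow : 0 < kelvin c R u x ^ 5 - u x ^ 5 :=
    pos_of_mul_pos_right ((by positivity : 0 < 3 * m / 4).trans_le hsource) hVx.le
  have hle : u x ≤ kelvin c R u x :=
    le_of_pow_le_pow_left₀ (by norm_num) hk.le (sub_pos.1 hpow).le
  rw [add_comm, ← le_sub_iff_add_le, div_le_iff₀ (by positivity)]
  calc 3 * m / 4 ≤ V x * (kelvin c R u x ^ 5 - u x ^ 5) := hsource
    _ ≤ (V c + A) * ((kelvin c R u x - u x) * (5 * M ^ 4)) := by
      gcongr
      · exact H.le_add hxr
      · exact_mod_cast pow_sub_pow_le_mul 5 hux.le hle (H.kelvin_le hR hRL hx)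
    _ = (kelvin c R u x - u x) * ((V c + A) * (5 * M ^ 4)) := by ring

theorem continuousOn_sphereDefect (H : MovingSphereRegime a m A r L M V u c) :
    ContinuousOn (fun q : ℝ × ℝ³ ↦ sphereDefect m A M u c q.1 q.2)
      {q | 0 < q.1 ∧ q.1 ≤ L ∧ q.1 ≤ dist q.2 c ∧ dist q.2 c ≤ r} := by
  set S : Set (ℝ × ℝ³) := {q | 0 < q.1 ∧ q.1 ≤ L ∧ q.1 ≤ dist q.2 c ∧ dist q.2 c ≤ r}
  have hu : ContinuousOn u (closedBall c r) := fun x hx ↦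
    (H.contDiffAt x hx).continuousAt.continuousWithinAt
  have hradius : ∀ q ∈ S, q.1 ≠ 0 := fun q hq ↦ hq.1.ne'
  have hdist : ∀ q ∈ S, dist q.2 c ≠ 0 := fun q hq ↦ (hq.1.trans_le hq.2.2.1).ne'
  have hι : ContinuousOn (fun q : ℝ × ℝ³ ↦ inversion c q.1 q.2) S :=
    continuousOn_const.inversion continuousOn_fst continuousOn_snd fun q hq ↦
      dist_ne_zero.1 (hdist q hq)
  have huι : ContinuousOn (fun q : ℝ × ℝ³ ↦ u (inversion c q.1 q.2)) S :=
    hu.comp hι fun q hq ↦ H.inversion_mem_closedBall hq.1 hq.2.1 hq.2.2.1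
  have hu₂ : ContinuousOn (fun q : ℝ × ℝ³ ↦ u q.2) S :=
    hu.comp continuousOn_snd fun q hq ↦ hq.2.2.2
  have hbarrier : ContinuousOn (fun q : ℝ × ℝ³ ↦
      barrierCoeff A M q.1 * (q.1⁻¹ - (dist q.2 c)⁻¹) ^ 2) S := by
    unfold barrierCoeff
    fun_prop (disch := assumption)
  simp only [sphereDefect, kelvin_apply_of_finrank_three]
  exact ((hu₂.sub ((continuousOn_fst.div (by fun_prop) hdist).mul huι)).sub hbarrier).sub
    (by fun_prop)

theorem exists_kelvin_gap_of_sphereDefect_neg (H : MovingSphereRegime a m A r L M V u c) :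
    ∃ ε > 0, ∀ R x, 0 < R → R ≤ L → R ≤ dist x c → dist x c ≤ r →
      sphereDefect m A M u c R x < 0 →
      ∃ y, R ≤ dist y c ∧ dist y c ≤ r ∧ u y + ε ≤ kelvin c R u y := by
  obtain ⟨ε, hε, hgap⟩ := H.exists_kelvin_gap_of_isLocalMin
  refine ⟨ε, hε, fun R x hR hRL hx hxr hneg ↦ ?_⟩
  set annulus : Set ℝ³ := {y | R ≤ dist y c ∧ dist y c ≤ r}
  have hcompact : IsCompact annulus :=
    (isCompact_closedBall c r).inter_left
      (isClosed_le continuous_const (continuous_id.dist continuous_const))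
  have hcont : ContinuousOn (sphereDefect m A M u c R) annulus :=
    H.continuousOn_sphereDefect.comp (f := fun y ↦ (R, y)) (by fun_prop)
      fun y hy ↦ ⟨hR, hRL, hy.1, hy.2⟩
  obtain ⟨y, ⟨hy, hyr⟩, hmin⟩ := hcompact.exists_isMinOn ⟨x, hx, hxr⟩ hcont
  have hyneg : sphereDefect m A M u c R y < 0 := (hmin ⟨hx, hxr⟩).trans_lt hneg
  have hy' : R < dist y c := hy.lt_of_ne fun h ↦
    hyneg.ne (sphereDefect_eq_zero hR.ne' h.symm)
  have hyr' : dist y c < r := hyr.lt_of_ne fun h ↦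
    hyneg.not_gt (H.sphereDefect_pos_of_dist_eq hR hRL h)
  have hopen : IsOpen {z : ℝ³ | R < dist z c ∧ dist z c < r} :=
    (isOpen_lt continuous_const (continuous_id.dist continuous_const)).inter isOpen_ball
  have hnhds : annulus ∈ 𝓝 y :=
    mem_of_superset (hopen.mem_nhds ⟨hy', hyr'⟩) fun z hz ↦ ⟨hz.1.le, hz.2.le⟩
  exact ⟨y, hy, hyr, hgap R y hR hRL hy hyr (hmin.isLocalMin hnhds)⟩

theorem eventually_kelvin_lt_add (H : MovingSphereRegime a m A r L M V u c) {ε : ℝ} (hε : 0 < ε) :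
    ∀ᶠ R in 𝓝[>] 0, ∀ x, R ≤ dist x c → dist x c ≤ r → kelvin c R u x < u x + ε := by
  have hm := H.m_pos
  have hM := H.M_pos
  have hr : 0 < r := H.r_pos
  have hcont : ContinuousAt u c := (H.contDiffAt c (mem_closedBall_self hr.le)).continuousAt
  obtain ⟨τ, hτ, hosc⟩ := continuousAt_iff.1 hcont (ε / 2) (half_pos hε)
  filter_upwards [Ioc_mem_nhdsGT H.L_pos, Ioo_mem_nhdsGT hτ,
    Ioo_mem_nhdsGT (show 0 < m * τ / M by positivity)] with R ⟨hR, hRL⟩ ⟨_, hRτ⟩ ⟨_, hRM⟩ x hx hxr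
  rcases lt_or_ge (dist x c) τ with hnear | hfar
  · have hι := H.inversion_mem_closedBall hR hRL hx
    have hosc₁ := abs_lt.1 (hosc ((dist_inversion_center_le hR hx).trans_lt hRτ))
    have hosc₂ := abs_lt.1 (hosc hnear)
    calc kelvin c R u x = R / dist x c * u (inversion c R x) := kelvin_apply_of_finrank_three ..
      _ ≤ u (inversion c R x) :=
        mul_le_of_le_one_left (hm.le.trans (H.m_le _ hι)) (div_le_one_of_le₀ hx dist_nonneg)
      _ < u x + ε := by linarith [hosc₁.2, hosc₂.1]
  · calc kelvin c R u x ≤ R / dist x c * M := H.kelvin_le_mul hR hRL hx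
      _ ≤ R / τ * M := by gcongr
      _ < m := by
        rw [div_mul_eq_mul_div, div_lt_iff₀ hτ]
        exact (lt_div_iff₀ hM).1 hRM
      _ ≤ u x := H.m_le x hxr
      _ < u x + ε := lt_add_of_pos_right _ hε

theorem kelvin_le_self (H : MovingSphereRegime a m A r L M V u c) (hR : 0 < R) (hRL : R ≤ L)
    (hx : R ≤ dist x c) (hxr : dist x c ≤ r) : kelvin c R u x ≤ u x := by
  obtain ⟨ε, hε, hgap⟩ := H.exists_kelvin_gap_of_sphereDefect_neg
  obtain ⟨R₀, hstart, hR₀, hR₀R⟩ :=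
    ((H.eventually_kelvin_lt_add hε).and (Ioc_mem_nhdsGT hR)).exists
  set T : Set (ℝ × ℝ³) := Set.Icc R₀ R ×ˢ closedBall c r ∩ {q | q.1 ≤ dist q.2 c}
  have hT : IsCompact T :=
    (isCompact_Icc.prod (isCompact_closedBall c r)).inter_right
      (isClosed_le continuous_fst (continuous_snd.dist continuous_const))
  have hcont : ContinuousOn (fun q : ℝ × ℝ³ ↦ sphereDefect m A M u c q.1 q.2) T :=
    H.continuousOn_sphereDefect.mono fun q hq ↦
      ⟨hR₀.trans_le hq.1.1.1, hq.1.1.2.trans hRL, hq.2, hq.1.2⟩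
  have hgapT (s z) (hsz : (s, z) ∈ T) (hneg : sphereDefect m A M u c s z < 0) :
      ∃ y, (s, y) ∈ T ∧ u y + ε ≤ kelvin c s u y := by
    obtain ⟨⟨hs, hzr⟩, hz⟩ := hsz
    obtain ⟨y, hy, hyr, hyε⟩ := hgap s z (hR₀.trans_le hs.1) (hs.2.trans hRL) hz hzr hneg
    exact ⟨y, ⟨⟨hs, hyr⟩, hy⟩, hyε⟩
  have hdefect : 0 ≤ sphereDefect m A M u c R x := by
    refine nonneg_of_gap_of_descend hT hcont hε (fun s z hsz hneg ↦ ?_) (fun s z hsz hneg ↦ ?_)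
      (R, x) ⟨⟨⟨hR₀R, le_rfl⟩, hxr⟩, hx⟩
    · obtain ⟨y, hyT, hyε⟩ := hgapT s z hsz hneg
      have hle := H.sphereDefect_le_sub_kelvin (hR₀.trans_le hyT.1.1.1) hyT.2
      exact ⟨y, hyT, by dsimp only; linarith⟩
    · obtain ⟨y, hyT, hyε⟩ := hgapT s z hsz hneg
      have hs : R₀ < s := by
        refine hsz.1.1.1.lt_of_ne ?_
        rintro rfl
        exact (hstart y hyT.2 hyT.1.2).not_ge hyε
      refine Eventually.frequently ?_
      filter_upwards [Ioo_mem_nhdsLT hs] with s' hs'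
      exact ⟨⟨⟨hs'.1.le, hs'.2.le.trans hsz.1.1.2⟩, hsz.1.2⟩, hs'.2.le.trans hsz.2⟩
  exact sub_nonneg.1 (hdefect.trans (H.sphereDefect_le_sub_kelvin hR hx))

end MovingSphereRegime

section BlowUp

/-- At height `h`, solutions are compared on balls of radius `blowUpScale a / h²`; the numerator is
chosen so that `a * blowUpScale a ^ 2 = 256` exceeds the bound `192` of
`CriticalSolution.mul_sq_mul_pow_le`. -/
noncomputable def blowUpScale (a : ℝ) : ℝ :=
  16 / √a

/-- The bound on the Hölder constant of `V` for which the moving spheres reach the blow-up scale. -/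
noncomputable def holderThreshold (a m : ℝ) : ℝ :=
  m / (256 * blowUpScale a ^ 2 * √(2 * blowUpScale a))

/-- The value of the a priori bound at the centre of a ball of radius `3 * σ`. -/
noncomputable def interiorBound (a m σ : ℝ) : ℝ :=
  1 + 16 * blowUpScale a / (σ * m) + 6 * blowUpScale a / σ

theorem blowUpScale_pos {a : ℝ} (ha : 0 < a) : 0 < blowUpScale a :=
  div_pos (by norm_num) (Real.sqrt_pos.2 ha)

theorem mul_blowUpScale_sq {a : ℝ} (ha : 0 < a) : a * blowUpScale a ^ 2 = 256 := by
  rw [blowUpScale, div_pow, sq_sqrt ha.le]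
  field_simp
  norm_num

theorem holderThreshold_pos {a m : ℝ} (ha : 0 < a) (hm : 0 < m) : 0 < holderThreshold a m := by
  have := blowUpScale_pos ha
  unfold holderThreshold
  positivity

theorem inversion_pointReflection {E : Type*} [NormedAddCommGroup E] [InnerProductSpace ℝ E]
    {x y : E} (hne : y ≠ x) :
    inversion (Equiv.pointReflection x y) (√2 * dist y x) y = x := by
  have hd : dist y x ≠ 0 := dist_ne_zero.2 hne
  have hratio : (√2 * dist y x / dist y (Equiv.pointReflection x y)) ^ 2 = 2⁻¹ := by
    rw [dist_right_pointReflection ℝ, Real.norm_two, dist_comm x y, mul_div_mul_right _ _ hd,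
      div_pow, sq_sqrt zero_le_two]
    norm_num
  rw [inversion_eq_lineMap, hratio, lineMap_inv_two, midpoint_pointReflection_left]

theorem of_interiorBound_lt {a m σ h : ℝ} (ha : 0 < a) (hm : 0 < m) (hσ : 0 < σ)
    (hh : interiorBound a m σ < h) :
    1 < h ∧ 16 * blowUpScale a < σ * m * h ∧ 6 * blowUpScale a < σ * h := by
  have hℓ := blowUpScale_pos ha
  have hterm₁ : 0 < 16 * blowUpScale a / (σ * m) := by positivity
  have hterm₂ : 0 < 6 * blowUpScale a / σ := by positivity
  rw [interiorBound] at hh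
  refine ⟨by linarith, (div_lt_iff₀' (by positivity)).1 ?_, (div_lt_iff₀' hσ).1 ?_⟩ <;> linarith

namespace CriticalSolution

variable {a m A ρ σ : ℝ} {V u : ℝ³ → ℝ} {p x₀ : ℝ³} {s t : Set ℝ³}

theorem mono (H : CriticalSolution a m A V u t) (hst : s ⊆ t) : CriticalSolution a m A V u s where
  a_pos := H.a_pos
  m_pos := H.m_pos
  A_pos := H.A_pos
  contDiffAt x hx := H.contDiffAt x (hst hx)
  m_le x hx := H.m_le x (hst hx)
  a_le x hx := H.a_le x (hst hx)
  holder x hx y hy := H.holder x (hst hx) y (hst hy)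
  laplacian_eq x hx := H.laplacian_eq x (hst hx)

theorem movingSphereRegime (H : CriticalSolution a m A V u (closedBall x₀ (2 * σ)))
    (hσ : σ ≤ 1) (hρ : 0 < ρ) (hρσ : 2 * ρ < σ) (hu : ∀ x ∈ closedBall x₀ (3 * ρ), u x ≤ 2 * u x₀)
    (hfar : 16 * ρ * u x₀ ≤ σ * m) (hholder : 256 * A * u x₀ ^ 5 * √(2 * ρ) * ρ ^ 2 ≤ m) {c : ℝ³}
    (hc : c ∈ closedBall x₀ ρ) :
    MovingSphereRegime a m A σ (2 * ρ) (2 * u x₀) V u c where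
  toCriticalSolution := H.mono (closedBall_subset_closedBall' (by linarith [mem_closedBall.1 hc]))
  L_pos := by positivity
  L_lt := hρσ
  r_le_one := hσ
  le_M x hx := hu x (closedBall_subset_closedBall' (by linarith [mem_closedBall.1 hc]) hx)
  far_le := by
    rw [div_mul_eq_mul_div, div_le_iff₀ (by linarith)]
    linarith
  holder_le := by linarith

/-- Run the moving spheres from the reflection of `y` through `x₀`: the sphere of radius
`√2 * dist y x₀` about that centre takes `y` to `x₀` with weight `√2 / 2`. -/
theorem half_le (H : CriticalSolution a m A V u (closedBall x₀ (2 * σ))) (hσ : σ ≤ 1)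
    (hρ : 0 < ρ) (hρσ : 2 * ρ < σ) (hu : ∀ x ∈ closedBall x₀ (3 * ρ), u x ≤ 2 * u x₀)
    (hfar : 16 * ρ * u x₀ ≤ σ * m) (hholder : 256 * A * u x₀ ^ 5 * √(2 * ρ) * ρ ^ 2 ≤ m) :
    ∀ y ∈ closedBall x₀ ρ, u x₀ / 2 ≤ u y := by
  intro y hy
  have hu₀ : 0 < u x₀ :=
    H.m_pos.trans_le (H.m_le x₀ (mem_closedBall_self (by linarith)))
  rcases eq_or_ne y x₀ with rfl | hne
  · linarith
  set c := Equiv.pointReflection x₀ y with hc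
  have ht : 0 < dist y x₀ := dist_pos.2 hne
  have htρ : dist y x₀ ≤ ρ := hy
  have hyc : dist y c = 2 * dist y x₀ := by
    rw [hc, dist_right_pointReflection ℝ, Real.norm_two, dist_comm]
  have hc : c ∈ closedBall x₀ ρ := by
    rwa [mem_closedBall, dist_pointReflection_left, dist_comm]
  have hsqrt : √2 ≤ 2 := by
    norm_num [Real.sqrt_le_left]
  have hk := (H.movingSphereRegime hσ hρ hρσ hu hfar hholder hc).kelvin_le_self
    (R := √2 * dist y x₀) (x := y) (by positivity) (by gcongr) (by rw [hyc]; gcongr)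
    (by linarith)
  rw [kelvin_apply_of_finrank_three, inversion_pointReflection hne, hyc,
    mul_div_mul_right _ _ ht.ne'] at hk
  have hone : 1 ≤ √2 := Real.one_le_sqrt.2 one_le_two
  nlinarith

theorem mul_sq_mul_pow_le (H : CriticalSolution a m A V u (closedBall x₀ ρ)) (hρ : 0 < ρ)
    (hlow : ∀ y ∈ closedBall x₀ ρ, u x₀ / 2 ≤ u y) : a * ρ ^ 2 * u x₀ ^ 4 ≤ 192 := by
  have ha := H.a_pos
  have hu₀ : 0 < u x₀ := H.m_pos.trans_le (H.m_le x₀ (mem_closedBall_self hρ.le))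
  obtain ⟨x, hx, hΔ⟩ := exists_neg_le_laplacian_of_sub_le (h := u x₀ / 2) (κ := u x₀ / ρ ^ 2) hρ
    H.contDiffAt (fun x hx ↦ by linarith [hlow x hx])
    (by rw [div_mul_cancel₀ _ (by positivity)]; exact half_lt_self hu₀)
  have hx' : x ∈ closedBall x₀ ρ := ball_subset_closedBall hx
  have hsource : a * (u x₀ / 2) ^ 5 ≤ V x * u x ^ 5 :=
    mul_le_mul (H.a_le x hx') (pow_le_pow_left₀ (by positivity) (hlow x hx') 5) (by positivity)
      (ha.le.trans (H.a_le x hx'))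
  rw [H.laplacian_eq x hx', finrank_euclideanSpace_fin, neg_le_neg_iff] at hΔ
  have hchain := hsource.trans hΔ
  rw [← mul_div_assoc, le_div_iff₀ (by positivity)] at hchain
  push_cast at hchain
  refine le_of_mul_le_mul_right ?_ hu₀
  linarith

theorem mul_lt_of_le_two_mul
    (H : CriticalSolution a m (holderThreshold a m) V u (closedBall x₀ (2 * σ))) (hσ : σ ≤ 1)
    (hρσ : 6 * (blowUpScale a / u x₀ ^ 2) ≤ σ)
    (hu : ∀ x ∈ closedBall x₀ (3 * (blowUpScale a / u x₀ ^ 2)), u x ≤ 2 * u x₀) :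
    σ * m * u x₀ < 16 * blowUpScale a := by
  set ℓ := blowUpScale a
  set h := u x₀
  set ρ := ℓ / h ^ 2
  have hℓ : 0 < ℓ := blowUpScale_pos H.a_pos
  have hh : 0 < h :=
    H.m_pos.trans_le (H.m_le x₀ (mem_closedBall_self (by linarith [show 0 ≤ ρ by positivity])))
  have hρ : 0 < ρ := by positivity
  have hρh : ρ * h ^ 2 = ℓ := div_mul_cancel₀ _ (by positivity)
  by_contra! hlarge
  have hfar : 16 * ρ * h ≤ σ * m := by
    refine le_of_mul_le_mul_right ?_ hh
    linarith
  have hholder : 256 * holderThreshold a m * h ^ 5 * √(2 * ρ) * ρ ^ 2 ≤ m := by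
    have hsqrt : √(2 * ρ) * h = √(2 * ℓ) := by
      rw [← hρh, ← mul_assoc, Real.sqrt_mul' _ (sq_nonneg h), sqrt_sq hh.le]
    refine le_of_eq ?_
    calc 256 * holderThreshold a m * h ^ 5 * √(2 * ρ) * ρ ^ 2
        = 256 * holderThreshold a m * (ρ * h ^ 2) ^ 2 * (√(2 * ρ) * h) := by ring
      _ = holderThreshold a m * (256 * ℓ ^ 2 * √(2 * ℓ)) := by
        rw [hρh, hsqrt]
        ring
      _ = m := div_mul_cancel₀ _ (by positivity)
  have hsource := (H.mono (closedBall_subset_closedBall (by linarith))).mul_sq_mul_pow_le hρ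
    (H.half_le hσ hρ (by linarith) hu hfar hholder)
  have hscale : a * ρ ^ 2 * h ^ 4 = 256 :=
    calc a * ρ ^ 2 * h ^ 4 = a * (ρ * h ^ 2) ^ 2 := by ring
      _ = 256 := by rw [hρh, mul_blowUpScale_sq H.a_pos]
  linarith

theorem le_interiorBound
    (H : CriticalSolution a m (holderThreshold a m) V u (closedBall p (3 * σ))) (hσ : 0 < σ)
    (hσ1 : σ ≤ 1) : u p ≤ interiorBound a m σ := by
  by_contra! hlarge
  obtain ⟨hone, hsmall, hscale⟩ := of_interiorBound_lt H.a_pos H.m_pos hσ hlarge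
  have hu : ContinuousOn (fun x ↦ u x ^ 2) (closedBall p σ) := fun x hx ↦
    ((H.contDiffAt x (closedBall_subset_closedBall (by linarith) hx)).continuousAt.pow
      2).continuousWithinAt
  obtain ⟨x₀, hx₀, hsel, hdouble⟩ := exists_doubling_point hu hσ (by positivity)
  have hdist : dist x₀ p < σ := hx₀
  have hx₀pos : 0 < u x₀ := H.m_pos.trans_le (H.m_le x₀ (mem_closedBall.2 (by linarith)))
  have hle : u p ≤ u x₀ := by
    refine le_of_sq_le_sq (le_of_mul_le_mul_left (hsel.trans ?_) hσ) hx₀pos.le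
    gcongr
    exact sub_le_self _ dist_nonneg
  have hρ : 6 * (blowUpScale a / u x₀ ^ 2) ≤ σ - dist x₀ p := by
    rw [← mul_div_assoc, div_le_iff₀ (by positivity)]
    calc 6 * blowUpScale a ≤ σ * u p := hscale.le
      _ ≤ σ * u p ^ 2 := by
        gcongr
        exact le_self_pow₀ hone.le two_ne_zero
      _ ≤ (σ - dist x₀ p) * u x₀ ^ 2 := hsel
  have htwo : ∀ x ∈ closedBall x₀ (3 * (blowUpScale a / u x₀ ^ 2)), u x ≤ 2 * u x₀ := fun x hx ↦ by
    refine le_of_sq_le_sq ?_ (by positivity)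
    nlinarith [hdouble x (closedBall_subset_closedBall (by linarith) hx)]
  have hlt := (H.mono (closedBall_subset_closedBall' (by linarith))).mul_lt_of_le_two_mul hσ1
    (hρ.trans (sub_le_self _ dist_nonneg)) htwo
  have hge : σ * m * u p ≤ σ * m * u x₀ :=
    mul_le_mul_of_nonneg_left hle (mul_pos hσ H.m_pos).le
  linarith

end CriticalSolution

end BlowUp

theorem lapl_eq_laplacian {n : ℕ} {u : EuclideanSpace ℝ (Fin n) → ℝ} {x : EuclideanSpace ℝ (Fin n)}
    (hu : ContDiffAt ℝ 2 u x) : lapl u x = Δ u x := by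
  rw [laplacian_eq_sum_fderiv_fderiv (EuclideanSpace.basisFun (Fin n) ℝ)]
  simp [lapl, fderiv_fderiv_apply_eq hu]

theorem sup_le_of_small_holder_const_general {a m : ℝ} (ha : 0 < a) (hm : 0 < m) :
    ∃ δ : ℝ, 0 < δ ∧ ∀ Ω : Set ℝ³, IsOpen Ω → ∀ K : Set ℝ³, IsCompact K → K ⊆ Ω →
      ∃ c : ℝ, 0 ≤ c ∧ ∀ V u : ℝ³ → ℝ,
        (∀ x ∈ Ω, a ≤ V x) →
        (∀ x ∈ Ω, ∀ y ∈ Ω, |V x - V y| ≤ δ * ‖x - y‖ ^ (1 / 2 : ℝ)) →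
        ContDiffOn ℝ 2 u Ω →
        (∀ x ∈ Ω, m ≤ u x) →
        (∀ x ∈ Ω, -lapl u x = V x * u x ^ 5) →
        ∀ x ∈ K, u x ≤ c := by
  refine ⟨holderThreshold a m, holderThreshold_pos ha hm, fun Ω hΩ K hK hKΩ ↦ ?_⟩
  obtain ⟨δ, hδ, hδΩ⟩ := hK.exists_cthickening_subset_open hΩ hKΩ
  set σ := min 1 (δ / 3)
  have hσ : 0 < σ := by positivity
  have hσδ : 3 * σ ≤ δ := by linarith [min_le_right 1 (δ / 3)]
  have hbound : 0 ≤ interiorBound a m σ := by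
    have := blowUpScale_pos ha
    unfold interiorBound
    positivity
  refine ⟨interiorBound a m σ, hbound, fun V u hV hH hu hlow heq p hp ↦ ?_⟩
  have hball : closedBall p (3 * σ) ⊆ Ω :=
    ((closedBall_subset_closedBall hσδ).trans (closedBall_subset_cthickening hp δ)).trans hδΩ
  have hC : CriticalSolution a m (holderThreshold a m) V u Ω :=
    { a_pos := ha
      m_pos := hm
      A_pos := holderThreshold_pos ha hm
      contDiffAt := fun x hx ↦ hu.contDiffAt (hΩ.mem_nhds hx)
      m_le := hlow
      a_le := hV
      holder := by simpa only [sqrt_eq_rpow, dist_eq_norm] using hH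
      laplacian_eq := fun x hx ↦ by
        rw [← heq x hx, lapl_eq_laplacian (hu.contDiffAt (hΩ.mem_nhds hx)), neg_neg] }
  exact (hC.mono hball).le_interiorBound hσ (min_le_left _ _)

/-- On the unit ball `B` of `ℝ³`, for `a, b, m > 0` there is
`δ = δ(a,b,m) > 0` such that for every compact `K ⊆ B` there is `c = c(a,b,m,K)`
with: for every `A ∈ (0, δ]`, every `V` with `a ≤ V ≤ b` which is `1/2`-Hölder
with constant `A`, and every `C²` solution `u ≥ m` of `Δu = V u⁵` in `B`,
one has `sup_K u ≤ c`. -/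
theorem sup_le_of_small_holder_const
    (a b m : ℝ) (ha : 0 < a) (hb : 0 < b) (hm : 0 < m) :
    ∃ δ : ℝ, 0 < δ ∧
      ∀ K : Set (EuclideanSpace ℝ (Fin 3)), IsCompact K →
        K ⊆ ball (0 : EuclideanSpace ℝ (Fin 3)) 1 →
        ∃ c : ℝ, ∀ (A : ℝ), 0 < A → A ≤ δ →
          ∀ (V u : EuclideanSpace ℝ (Fin 3) → ℝ),
            (∀ x ∈ ball (0 : EuclideanSpace ℝ (Fin 3)) 1, a ≤ V x ∧ V x ≤ b) →
            (∀ x ∈ ball (0 : EuclideanSpace ℝ (Fin 3)) 1,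
              ∀ y ∈ ball (0 : EuclideanSpace ℝ (Fin 3)) 1,
                |V x - V y| ≤ A * ‖x - y‖ ^ (1 / 2 : ℝ)) →
            ContDiffOn ℝ 2 u (ball (0 : EuclideanSpace ℝ (Fin 3)) 1) →
            (∀ x ∈ ball (0 : EuclideanSpace ℝ (Fin 3)) 1, m ≤ u x) →
            (∀ x ∈ ball (0 : EuclideanSpace ℝ (Fin 3)) 1, -lapl u x = V x * u x ^ 5) →
            sSup (u '' K) ≤ c := by
  obtain ⟨δ, hδ, hbound⟩ := sup_le_of_small_holder_const_general ha hm
  refine ⟨δ, hδ, fun K hK hKB ↦ ?_⟩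
  obtain ⟨c, hc, hle⟩ := hbound _ isOpen_ball K hK hKB
  refine ⟨c, fun A _ hAδ V u hV hH hu hlow heq ↦ Real.sSup_le (Set.forall_mem_image.2 ?_) hc⟩
  exact hle V u (fun x hx ↦ (hV x hx).1) (fun x hx y hy ↦ (hH x hx y hy).trans (by gcongr))
    hu hlow heq
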